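/- Let Δ be a complete smooth fan in ℝ^n with respect to the lattice ℤ^n (i.e. the union of the cones of Δ is all of ℝ^n), let Γ be a subgroup of Hom(ℤ^n, ℤ), and suppose the subspace U = Γ ⊗ ℝ ⊆ Hom(ℝ^n, ℝ) has property (E) with respect to every cone of Δ. Then the subspace U^⊥ = {v ∈ ℝ^n : ⟨u, v⟩ = 0 for all u ∈ U} is equal to the union of those cones of Δ that are contained in U^⊥. -/

import Mathlib

/-- The canonical embedding of `ℤ^n` into `ℝ^n`. -/
noncomputable def toR {n : ℕ} (x : Fin n → ℤ) : Fin n → ℝ := fun i => (x i : ℝ)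

/-- The cone of nonnegative real linear combinations of the finite set `s` of integer
vectors. -/
noncomputable def coneOf {n : ℕ} (s : Finset (Fin n → ℤ)) : Set (Fin n → ℝ) :=
  {v | ∃ c : (Fin n → ℤ) → ℝ, (∀ x, 0 ≤ c x) ∧ v = ∑ x ∈ s, c x • toR x}

/-- A smooth fan in `ℝ^n` with respect to the lattice `ℤ^n`: a finite collection of cones,
each recorded by its finite set of integral generators, such that the generators of each cone
are linearly independent and span a direct summand of `ℤ^n`, the collection is closed under
taking faces (subsets of the generators), and the intersection of any two cones of the fan is
a face of each of them. -/
def IsSmoothFan {n : ℕ} (Δ : Finset (Finset (Fin n → ℤ))) : Prop :=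
  (∀ s ∈ Δ, LinearIndependent ℝ (fun x : s => toR (x : Fin n → ℤ))) ∧
  (∀ s ∈ Δ, ∃ P : Submodule ℤ (Fin n → ℤ),
      IsCompl (Submodule.span ℤ (s : Set (Fin n → ℤ))) P) ∧
  (∀ s ∈ Δ, ∀ t ⊆ s, t ∈ Δ) ∧
  (∀ s ∈ Δ, ∀ t ∈ Δ,
      (∃ u ⊆ s, coneOf s ∩ coneOf t = coneOf u) ∧
      (∃ u ⊆ t, coneOf s ∩ coneOf t = coneOf u))

/-- A subspace `U ⊆ Hom(ℝ^n, ℝ) = ℝ^n` has property (E) with respect to the cone generated by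
`s`: `U` admits a basis `u_1, …, u_r` pairing nonnegatively with every generator of `s`. -/
def SubspacePropE {n : ℕ} (U : Submodule ℝ (Fin n → ℝ)) (s : Finset (Fin n → ℤ)) : Prop :=
  ∃ (r : ℕ) (u : Fin r → Fin n → ℝ), LinearIndependent ℝ u ∧
    Submodule.span ℝ (Set.range u) = U ∧ ∀ i, ∀ x ∈ s, 0 ≤ ∑ k, u i k * (x k : ℝ)

/-!
A vector `v ∈ U^⊥` lies in some cone `C` of `Δ`. By property (E), `U` is spanned by functionals that
are nonnegative on `C`, so `C ∩ U^⊥`, where they all vanish, is a face of `C`. Being a face, it is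
generated by the generators of `C` it contains, hence is a cone of `Δ`; it contains `v` and is
contained in `U^⊥`.
-/

open PointedCone (hull dual)

theorem hull_inter_eq_of_isFaceOf_hull {R N : Type*} [Semiring R] [PartialOrder R]
    [IsOrderedRing R] [AddCommGroup N] [Module R N] {A : Set N} {F : PointedCone R N}
    (hF : F.IsFaceOf (hull R A)) : hull R (A ∩ F) = F := by
  refine le_antisymm (Submodule.span_le.mpr Set.inter_subset_right) fun v hv => ?_
  induction hF.le hv using Submodule.span_induction with
  | mem x hx => exact Submodule.subset_span ⟨hx, hv⟩
  | zero => exact zero_mem _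
  | add x y hx hy ihx ihy =>
    have ⟨hxF, hyF⟩ := (hF.add_mem_iff_mem hx hy).mp hv
    exact add_mem (ihx hxF) (ihy hyF)
  | smul r x hx ih =>
    rcases eq_or_lt_of_le r.2 with hr | hr
    · obtain rfl : r = 0 := Subtype.ext hr.symm
      simp only [zero_smul, zero_mem]
    · refine Submodule.smul_mem _ r (ih ?_)
      exact hF.mem_of_smul_add_mem hx (zero_mem _) hr ((add_zero (r • x)).symm ▸ hv)

theorem mem_orthogonalBilin_span_iff {R M N : Type*} [CommSemiring R] [AddCommMonoid M] [Module R M]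
    [AddCommMonoid N] [Module R N] {p : M →ₗ[R] N →ₗ[R] R} {S : Set M} {v : N} :
    v ∈ (Submodule.span R S).orthogonalBilin p ↔ ∀ u ∈ S, p u v = 0 :=
  Submodule.span_le (p := LinearMap.ker (p.flip v))

section Pairing

variable {R M N : Type*} [CommSemiring R] [PartialOrder R] [IsOrderedRing R]
  [AddCommMonoid M] [Module R M]

/-- Property (E) of a submodule `U` with respect to a cone `C`, for a bilinear pairing `p`: `U` is
spanned by elements pairing nonnegatively with `C`. The spanning set is not required to be a basis,
since over a field any spanning set contains one. -/
def HasPropertyE [AddCommMonoid N] [Module R N] (p : M →ₗ[R] N →ₗ[R] R) (U : Submodule R M)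
    (C : PointedCone R N) : Prop :=
  ∃ S : Set M, Submodule.span R S = U ∧ C ≤ dual p S

variable [NoZeroDivisors R] [AddCommGroup N] [Module R N] {p : M →ₗ[R] N →ₗ[R] R}
  {U : Submodule R M}

theorem HasPropertyE.isFaceOf_inf_orthogonalBilin {C : PointedCone R N}
    (hE : HasPropertyE p U C) :
    (C ⊓ .ofSubmodule (U.orthogonalBilin p)).IsFaceOf C := by
  obtain ⟨S, rfl, hS⟩ := hE
  refine ⟨inf_le_left, fun {x y a} hx hy ha hxy => ⟨hx, ?_⟩⟩
  have hvanish : ∀ u ∈ S, p u (a • x + y) = 0 := mem_orthogonalBilin_span_iff.mp hxy.2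
  refine mem_orthogonalBilin_span_iff.mpr fun u hu => ?_
  have hsum : a * p u x + p u y = 0 := by
    simpa only [map_add, map_smul, smul_eq_mul] using hvanish u hu
  have hax : a * p u x = 0 :=
    ((add_eq_zero_iff_of_nonneg (mul_nonneg ha.le (hS hx hu)) (hS hy hu)).mp hsum).1
  exact (mul_eq_zero.mp hax).resolve_left ha.ne'

theorem HasPropertyE.hull_inter_orthogonalBilin {A : Set N} (hE : HasPropertyE p U (hull R A)) :
    (hull R (A ∩ U.orthogonalBilin p) : Set N) = (hull R A : Set N) ∩ U.orthogonalBilin p := by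
  have hgen : A ∩ ((hull R A : Set N) ∩ U.orthogonalBilin p) = A ∩ U.orthogonalBilin p := by
    rw [← Set.inter_assoc, Set.inter_eq_left.mpr PointedCone.subset_hull]
  rw [← hgen]
  exact congrArg SetLike.coe (hull_inter_eq_of_isFaceOf_hull hE.isFaceOf_inf_orthogonalBilin)

theorem stmt14_general {ι : Type*} (e : ι → N) (Δ : Set (Finset ι)) (hΔ : IsLowerSet Δ)
    (hE : ∀ s ∈ Δ, HasPropertyE p U (hull R (e '' s))) :
    (⋃ s ∈ Δ, (hull R (e '' s) : Set N)) ∩ U.orthogonalBilin p =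
      ⋃ s ∈ {s | s ∈ Δ ∧ (hull R (e '' s) : Set N) ⊆ U.orthogonalBilin p},
        (hull R (e '' s) : Set N) := by
  classical
  refine subset_antisymm ?_ fun v hv => ?_
  · rintro v ⟨hv, hvU⟩
    obtain ⟨s, hs, hvs⟩ := Set.mem_iUnion₂.mp hv
    let t := {i ∈ s | e i ∈ U.orthogonalBilin p}
    have ht : (hull R (e '' t) : Set N) = (hull R (e '' s) : Set N) ∩ U.orthogonalBilin p := by
      rw [← (hE s hs).hull_inter_orthogonalBilin, ← Set.image_inter_preimage, Finset.coe_filter]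
      rfl
    refine Set.mem_biUnion ⟨hΔ (Finset.filter_subset _ s) hs, ?_⟩ (ht.superset ⟨hvs, hvU⟩)
    exact ht.trans_subset Set.inter_subset_right
  · obtain ⟨s, ⟨hs, hsU⟩, hvs⟩ := Set.mem_iUnion₂.mp hv
    exact ⟨Set.mem_biUnion hs hvs, hsU hvs⟩

end Pairing

theorem IsSmoothFan.isLowerSet {n : ℕ} {Δ : Finset (Finset (Fin n → ℤ))} (hΔ : IsSmoothFan Δ) :
    IsLowerSet (Δ : Set (Finset (Fin n → ℤ))) :=
  fun s t hts hs => hΔ.2.2.1 s hs t hts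

theorem coneOf_eq_hull {n : ℕ} (s : Finset (Fin n → ℤ)) :
    coneOf s = hull ℝ (toR '' (s : Set (Fin n → ℤ))) := by
  ext v
  rw [SetLike.mem_coe, Submodule.mem_span_image_finset_iff_exists_fun']
  constructor
  · rintro ⟨c, hc, rfl⟩
    exact ⟨fun x => ⟨c x, hc x⟩, rfl⟩
  · rintro ⟨c, rfl⟩
    exact ⟨fun x => c x, fun x => (c x).2, rfl⟩

theorem SubspacePropE.hasPropertyE {n : ℕ} {U : Submodule ℝ (Fin n → ℝ)}
    {s : Finset (Fin n → ℤ)} (hE : SubspacePropE U s) :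
    HasPropertyE (dotProductBilin ℝ ℝ) U (hull ℝ (toR '' (s : Set (Fin n → ℤ)))) := by
  obtain ⟨r, u, -, hspan, hnonneg⟩ := hE
  refine ⟨Set.range u, hspan, Submodule.span_le.mpr ?_⟩
  rintro _ ⟨x, hx, rfl⟩ _ ⟨i, rfl⟩
  exact hnonneg i x hx

/-- Remark 3.9(1): if `Δ` is a complete smooth fan and the real span `U` of a subgroup `Γ` of
`Hom(ℤ^n, ℤ)` has property (E) with respect to every cone of `Δ`, then the subspace `U^⊥` is
the union of the cones of `Δ` that it contains. -/
theorem stmt14 {n : ℕ} (Δ : Finset (Finset (Fin n → ℤ))) (hΔ : IsSmoothFan Δ)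
    (hcomplete : ∀ v : Fin n → ℝ, ∃ s ∈ Δ, v ∈ coneOf s)
    (Γ : Submodule ℤ (Fin n → ℤ))
    (U : Submodule ℝ (Fin n → ℝ))
    (hU : U = Submodule.span ℝ (toR '' (Γ : Set (Fin n → ℤ))))
    (hE : ∀ s ∈ Δ, SubspacePropE U s) :
    let perp : Set (Fin n → ℝ) := {v | ∀ u ∈ U, ∑ k, u k * v k = 0}
    perp = ⋃ s ∈ {s : Finset (Fin n → ℤ) | s ∈ Δ ∧ coneOf s ⊆ perp}, coneOf s := by
  simp only [coneOf_eq_hull] at hcomplete ⊢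
  refine .trans (Set.inter_eq_right.mpr fun v _ => ?_).symm
    (stmt14_general toR Δ hΔ.isLowerSet fun s hs => (hE s hs).hasPropertyE)
  exact Set.mem_iUnion₂.mpr (by simpa using hcomplete v)
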